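/- arXiv:1601.04856 — 2 statements merged into one kernel-verified Lean document; each statement's English description precedes it below -/
import Mathlib

section
/- If H is a 4-uniform hypergraph with maximum degree Δ(H) ≤ 2, then τ_g(H) ≤ (7/18) n(H). -/
variable {V : Type} [Fintype V] [DecidableEq V]

/-- The set of legal moves in the transversal game with uncovered edge set `E`:
the vertices hitting at least one uncovered edge. -/
def playable (E : Finset (Finset V)) : Finset V :=
  Finset.univ.filter (fun v => ∃ e ∈ E, v ∈ e)

/-- The number of moves remaining in the transversal game with uncovered edge set `E`
under optimal play, where `ehTurn = true` iff Edge-hitter (the minimizer) moves next;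
Staller (the maximizer) moves next iff `ehTurn = false`.  Each move must hit at least
one uncovered edge, and the game ends when no uncovered edge remains. -/
def gameVal (ehTurn : Bool) (E : Finset (Finset V)) : ℕ :=
  if h : (playable E).Nonempty then
    1 +
      (if ehTurn then
        (playable E).attach.inf' (Finset.attach_nonempty_iff.mpr h)
          (fun v => gameVal (!ehTurn) (E.filter (fun e => v.1 ∉ e)))
      else
        (playable E).attach.sup' (Finset.attach_nonempty_iff.mpr h)
          (fun v => gameVal (!ehTurn) (E.filter (fun e => v.1 ∉ e))))
  else 0
termination_by E.card
decreasing_by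
  all_goals
    obtain ⟨v, hv⟩ := v
    simp only [playable, Finset.mem_filter, Finset.mem_univ, true_and] at hv
    obtain ⟨e, he, hve⟩ := hv
    exact Finset.card_lt_card (Finset.filter_ssubset.mpr ⟨e, he, by simp [hve]⟩)

/-- The game transversal number `τ_g`: Edge-hitter makes the first move. -/
def gameTransversalNum (E : Finset (Finset V)) : ℕ := gameVal true E

/-- The Staller-start game transversal number `τ_g'`: Staller makes the first move. -/
def stallerGameTransversalNum (E : Finset (Finset V)) : ℕ := gameVal false E

/-- The transversal number `τ`: the minimum size of a set of vertices meeting all edges. -/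
noncomputable def transversalNum (E : Finset (Finset V)) : ℕ :=
  sInf {n | ∃ T : Finset V, (∀ e ∈ E, ∃ v ∈ T, v ∈ e) ∧ T.card = n}

/-!
Since every vertex lies in at most two edges, `H` is the dual of a loopless multigraph of maximum
degree at most `4` whose vertices are the edges of `H`: choosing a vertex of `H` deletes either two
adjacent vertices of the multigraph or a single vertex of degree at most `3`. Give each remaining
multigraph vertex the weight `18` minus its current degree; counted at the vertices of `H`, the
initial total is at most `7 n(H)`. Deleting `x` lowers the total by `18 - 2 deg x`, so Staller
removes at least `12`, and only the deletion of a vertex of degree `3` removes less than `14`.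
Lowering the total by `2` whenever some degree lies strictly between `0` and `4` makes up for this
deficit: Edge-hitter can then always remove `36` from the corrected total in each pair of moves.
-/

/-- A loopless multigraph on the vertex type `α`, encoded by the number `mult x y` of edges joining
`x` and `y`. It models the intersection pattern of the edges of a hypergraph. -/
structure LooplessMultigraph (α : Type*) where
  mult : α → α → ℕ
  mult_comm : ∀ x y, mult x y = mult y x
  mult_self : ∀ x, mult x x = 0

namespace LooplessMultigraph

variable {α : Type*} (G : LooplessMultigraph α) {S T : Finset α} {a b p v x y : α}

/-- The number of edges joining `x` to vertices in `S`. For `x ∈ S` this is the degree of `x` in the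
submultigraph induced by `S`. -/
def degIn (S : Finset α) (x : α) : ℕ :=
  ∑ y ∈ S, G.mult x y

/-- The vertices in `S` adjacent to `x`. -/
def neighborsIn (S : Finset α) (x : α) : Finset α :=
  S.filter (0 < G.mult x ·)

/-- The weight of the position in which the vertices in `S` remain. It is integer-valued, since a
summand could be negative in a multigraph of large degree. -/
def potential (S : Finset α) : ℤ :=
  ∑ x ∈ S, (18 - (G.degIn S x : ℤ))

/-- Some vertex of the submultigraph induced by `S` is neither isolated nor of the maximum possible
degree `4`. -/
def HasDeficient (S : Finset α) : Prop :=
  ∃ x ∈ S, 0 < G.degIn S x ∧ G.degIn S x < 4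

instance : Decidable (G.HasDeficient S) :=
  inferInstanceAs (Decidable (∃ x ∈ S, 0 < G.degIn S x ∧ G.degIn S x < 4))

/-- The potential with a correction of `2` in favour of Edge-hitter at positions with a deficient
vertex. It bounds `18` times the number of remaining moves when Edge-hitter is to move. -/
def adjustedPotential (S : Finset α) : ℤ :=
  G.potential S - if G.HasDeficient S then 2 else 0

/-- The position `S` is tight if deleting any two adjacent vertices destroys at least six edges. -/
def IsTight (S : Finset α) : Prop :=
  ∀ x ∈ S, ∀ y ∈ S, 0 < G.mult x y → G.mult x y + 6 ≤ G.degIn S x + G.degIn S y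

theorem degIn_mono (h : S ⊆ T) (x : α) : G.degIn S x ≤ G.degIn T x :=
  Finset.sum_le_sum_of_subset h

theorem neighborsIn_subset (S : Finset α) (x : α) : G.neighborsIn S x ⊆ S :=
  Finset.filter_subset _ _

theorem degIn_neighborsIn (S : Finset α) (x : α) : G.degIn (G.neighborsIn S x) x = G.degIn S x :=
  Finset.sum_filter_of_ne fun _ _ => Nat.pos_of_ne_zero

theorem adjustedPotential_le_potential (S : Finset α) : G.adjustedPotential S ≤ G.potential S := by
  unfold adjustedPotential
  split_ifs <;> omega

variable {G}

theorem mem_neighborsIn : y ∈ G.neighborsIn S x ↔ y ∈ S ∧ 0 < G.mult x y :=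
  Finset.mem_filter

theorem ne_of_mult_pos (h : 0 < G.mult x y) : x ≠ y := by
  rintro rfl
  exact h.ne' (G.mult_self x)

theorem mult_le_degIn (hy : y ∈ S) : G.mult x y ≤ G.degIn S x :=
  Finset.single_le_sum_of_canonicallyOrdered hy

theorem degIn_le_of_subset {d : ℕ} (hTS : T ⊆ S) (hmax : ∀ x ∈ S, G.degIn S x ≤ d) :
    ∀ x ∈ T, G.degIn T x ≤ d :=
  fun x hx => (G.degIn_mono hTS x).trans (hmax x (hTS hx))

theorem exists_mult_pos_of_degIn_pos (h : 0 < G.degIn S x) : ∃ y ∈ S, 0 < G.mult x y :=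
  Finset.sum_pos_iff.1 h

theorem mul_card_le_potential {d : ℕ} (hd : ∀ x ∈ S, G.degIn S x ≤ d) :
    (18 - d : ℤ) * S.card ≤ G.potential S := by
  rw [mul_comm, ← nsmul_eq_mul]
  exact Finset.card_nsmul_le_sum _ _ _ fun x hx => by have := hd x hx; omega

theorem adjustedPotential_of_hasDeficient (h : G.HasDeficient S) :
    G.adjustedPotential S = G.potential S - 2 := by
  rw [adjustedPotential, if_pos h]

theorem adjustedPotential_of_not_hasDeficient (h : ¬G.HasDeficient S) :
    G.adjustedPotential S = G.potential S := by
  rw [adjustedPotential, if_neg h, sub_zero]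

theorem eighteen_le_adjustedPotential (hS : S.Nonempty) (hmax : ∀ x ∈ S, G.degIn S x ≤ 4) :
    18 ≤ G.adjustedPotential S := by
  by_cases hedge : ∃ x ∈ S, 0 < G.degIn S x
  · obtain ⟨x, hx, hdx⟩ := hedge
    obtain ⟨y, hy, hxy⟩ := exists_mult_pos_of_degIn_pos hdx
    have hcard : 1 < S.card := Finset.one_lt_card.2 ⟨x, hx, y, hy, ne_of_mult_pos hxy⟩
    have hpot := mul_card_le_potential hmax
    unfold adjustedPotential
    split_ifs <;> omega
  · push Not at hedge
    have hdef : ¬G.HasDeficient S := fun ⟨x, hx, hpos, _⟩ => (hedge x hx).not_gt hpos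
    have hpot := mul_card_le_potential hedge
    have hcard := hS.card_pos
    rw [adjustedPotential_of_not_hasDeficient hdef]
    omega

theorem adjustedPotential_nonneg (hmax : ∀ x ∈ S, G.degIn S x ≤ 4) :
    0 ≤ G.adjustedPotential S := by
  rcases S.eq_empty_or_nonempty with rfl | hS
  · simp [adjustedPotential, potential, HasDeficient]
  · linarith [eighteen_le_adjustedPotential hS hmax]

theorem degIn_eq_zero_or_four (hmax : ∀ x ∈ S, G.degIn S x ≤ 4) (hdef : ¬G.HasDeficient S)
    (hx : x ∈ S) : G.degIn S x = 0 ∨ G.degIn S x = 4 := by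
  have hextreme : ¬(0 < G.degIn S x ∧ G.degIn S x < 4) := fun h => hdef ⟨x, hx, h⟩
  have := hmax x hx
  omega

theorem IsTight.mult_add_two_le (ht : G.IsTight S) (hmax : ∀ x ∈ S, G.degIn S x ≤ 4) (hx : x ∈ S)
    (hy : y ∈ S) (hxy : 0 < G.mult x y) : G.mult x y + 2 ≤ G.degIn S x := by
  have := ht x hx y hy hxy
  have := hmax y hy
  omega

theorem IsTight.degIn_le_card_neighborsIn_mul (ht : G.IsTight S)
    (hmax : ∀ x ∈ S, G.degIn S x ≤ 4) (hTS : T ⊆ S) (hx : x ∈ S) :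
    G.degIn T x ≤ (G.neighborsIn T x).card * (G.degIn S x - 2) := by
  rw [← G.degIn_neighborsIn T x]
  refine Finset.sum_le_card_nsmul _ _ _ fun y hy => ?_
  obtain ⟨hyT, hxy⟩ := mem_neighborsIn.1 hy
  exact Nat.le_sub_of_add_le (ht.mult_add_two_le hmax hx (hTS hyT) hxy)

variable (G) [DecidableEq α]

theorem degIn_erase_add (ha : a ∈ S) (x : α) :
    G.degIn (S.erase a) x + G.mult x a = G.degIn S x :=
  Finset.sum_erase_add S _ ha

theorem degIn_erase_self (S : Finset α) (a : α) : G.degIn (S.erase a) a = G.degIn S a :=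
  Finset.sum_erase S (G.mult_self a)

theorem degIn_erase_erase_add (ha : a ∈ S) (hb : b ∈ S) (hab : a ≠ b) (x : α) :
    G.degIn ((S.erase a).erase b) x + G.mult x a + G.mult x b = G.degIn S x := by
  rw [← G.degIn_erase_add ha x, ← G.degIn_erase_add (Finset.mem_erase.2 ⟨hab.symm, hb⟩) x]
  ring

theorem potential_erase (ha : a ∈ S) :
    G.potential (S.erase a) = G.potential S - 18 + 2 * G.degIn S a := by
  have hsummand : ∀ x ∈ S.erase a,
      18 - (G.degIn (S.erase a) x : ℤ) = (18 - (G.degIn S x : ℤ)) + G.mult a x := fun x _ => by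
    have := G.degIn_erase_add ha x
    have := G.mult_comm a x
    omega
  calc G.potential (S.erase a)
      = ∑ x ∈ S.erase a, (18 - (G.degIn S x : ℤ)) + G.degIn (S.erase a) a := by
        rw [potential, Finset.sum_congr rfl hsummand, Finset.sum_add_distrib, degIn, Nat.cast_sum]
    _ = G.potential S - (18 - G.degIn S a) + G.degIn S a := by
        rw [Finset.sum_erase_eq_sub ha, G.degIn_erase_self, potential]
    _ = G.potential S - 18 + 2 * G.degIn S a := by ring

theorem potential_erase_erase (ha : a ∈ S) (hb : b ∈ S) (hab : a ≠ b) :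
    G.potential ((S.erase a).erase b) =
      G.potential S - 36 + 2 * (G.degIn S a + G.degIn S b - G.mult a b) := by
  have hdb := G.degIn_erase_add ha b
  rw [G.potential_erase (Finset.mem_erase.2 ⟨hab.symm, hb⟩), G.potential_erase ha, G.mult_comm a b]
  omega

/-- `T` arises from `S` by deleting two adjacent vertices, or one vertex of degree at most `d`.
In the game on a `4`-uniform hypergraph of maximum degree at most `2`, every legal move has this
form with `d = 3`, and every deletion of this form with `d = 0` is a legal move. -/
def Move (d : ℕ) (S T : Finset α) : Prop :=
  (∃ x ∈ S, G.degIn S x ≤ d ∧ T = S.erase x) ∨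
    ∃ x ∈ S, ∃ y ∈ S, 0 < G.mult x y ∧ T = (S.erase x).erase y

variable {G}

theorem Move.of_mult_pos {d : ℕ} (hx : x ∈ S) (hy : y ∈ S) (hxy : 0 < G.mult x y) :
    G.Move d S ((S.erase x).erase y) :=
  .inr ⟨x, hx, y, hy, hxy, rfl⟩

theorem Move.potential_add_fourteen_le_or (h : G.Move 3 S T) (hmax : ∀ x ∈ S, G.degIn S x ≤ 4) :
    G.potential T + 14 ≤ G.potential S ∨ ∃ x ∈ S, G.degIn S x = 3 ∧ T = S.erase x := by
  rcases h with ⟨x, hx, hdx, rfl⟩ | ⟨x, hx, y, hy, hxy, rfl⟩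
  · have hpot := G.potential_erase hx
    rcases hdx.eq_or_lt with hdx | hdx
    · exact .inr ⟨x, hx, hdx, rfl⟩
    · left; omega
  · have hpot := G.potential_erase_erase hx hy (ne_of_mult_pos hxy)
    have := hmax x hx
    have := hmax y hy
    left; omega

theorem Move.adjustedPotential_add_twelve_le (h : G.Move 3 S T)
    (hmax : ∀ x ∈ S, G.degIn S x ≤ 4) : G.adjustedPotential T + 12 ≤ G.potential S := by
  have hadj := G.adjustedPotential_le_potential T
  rcases h.potential_add_fourteen_le_or hmax with hpot | ⟨x, hx, hdx, rfl⟩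
  · omega
  · have hpot := G.potential_erase hx
    omega

theorem Move.adjustedPotential_add_fourteen_le (h : G.Move 3 S T)
    (hmax : ∀ x ∈ S, G.degIn S x ≤ 4)
    (hdef : ∀ x ∈ S, G.degIn S x = 3 → G.HasDeficient (S.erase x)) :
    G.adjustedPotential T + 14 ≤ G.potential S := by
  rcases h.potential_add_fourteen_le_or hmax with hpot | ⟨x, hx, hdx, rfl⟩
  · linarith [G.adjustedPotential_le_potential T]
  · have hpot := G.potential_erase hx
    rw [adjustedPotential_of_hasDeficient (hdef x hx hdx)]
    omega

theorem hasDeficient_erase_erase_erase_of_simple (hmax : ∀ x ∈ S, G.degIn S x ≤ 4)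
    (hdef : ¬G.HasDeficient S) (hsimple : ∀ x ∈ S, ∀ y ∈ S, G.mult x y ≤ 1)
    (ha : a ∈ S) (hb : b ∈ S) (hab : a ≠ b) (hx : x ∈ (S.erase a).erase b)
    (hdx : 0 < G.degIn ((S.erase a).erase b) x) :
    G.HasDeficient (((S.erase a).erase b).erase x) := by
  obtain ⟨y, hy, hxy⟩ := exists_mult_pos_of_degIn_pos hdx
  have hxS := Finset.mem_of_mem_erase (Finset.mem_of_mem_erase hx)
  have hyS := Finset.mem_of_mem_erase (Finset.mem_of_mem_erase hy)
  have hyx : 0 < G.mult y x := G.mult_comm x y ▸ hxy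
  have hdy : G.degIn S y = 4 :=
    (degIn_eq_zero_or_four hmax hdef hyS).resolve_left (hyx.trans_le (mult_le_degIn hxS)).ne'
  have hrest := G.degIn_erase_add hx y
  have hpair := G.degIn_erase_erase_add ha hb hab y
  have := hsimple y hyS a ha
  have := hsimple y hyS b hb
  have := hsimple y hyS x hxS
  exact ⟨y, Finset.mem_erase.2 ⟨(ne_of_mult_pos hxy).symm, hy⟩, by omega, by omega⟩

theorem erase_erase_erase_subset (S : Finset α) (a b x : α) :
    ((S.erase a).erase b).erase x ⊆ S :=
  (Finset.erase_subset x _).trans ((Finset.erase_subset b _).trans (Finset.erase_subset a S))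

theorem IsTight.mult_add_mult_add_mult_eq_four (ht : G.IsTight S)
    (hmax : ∀ x ∈ S, G.degIn S x ≤ 4) (hp : p ∈ S) (hv : v ∈ S) (hpv : p ≠ v)
    (hdp : G.degIn S p = 3) (hx : x ∈ (S.erase p).erase v) {U : Finset α}
    (hU : U = ((S.erase p).erase v).erase x) (hdef : ¬G.HasDeficient U) (hy : y ∈ U)
    (hxy : 0 < G.mult x y) : G.mult p y + G.mult v y + G.mult x y = 4 := by
  have hUS : U ⊆ S := hU ▸ erase_erase_erase_subset S p v x
  have hxS := Finset.mem_of_mem_erase (Finset.mem_of_mem_erase hx)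
  have hyS := hUS hy
  have hpair := G.degIn_erase_erase_add hp hv hpv y
  have hrest := G.degIn_erase_add hx y
  rw [G.mult_comm y p, G.mult_comm y v] at hpair
  rw [G.mult_comm y x, ← hU] at hrest
  have hdv := hmax v hv
  have hdx := hmax x hxS
  have hdy := hmax y hyS
  have htp := ht p hp y hyS
  have htv := ht v hv y hyS
  have htx := ht x hxS y hyS hxy
  have hdyU := degIn_eq_zero_or_four (degIn_le_of_subset hUS hmax) hdef hy
  omega

theorem IsTight.card_neighborsIn_mul_four_le (ht : G.IsTight S)
    (hmax : ∀ x ∈ S, G.degIn S x ≤ 4) (hp : p ∈ S) (hv : v ∈ S) (hpv : p ≠ v)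
    (hdp : G.degIn S p = 3) (hx : x ∈ (S.erase p).erase v) {U : Finset α}
    (hU : U = ((S.erase p).erase v).erase x) (hdef : ¬G.HasDeficient U) :
    (G.neighborsIn U x).card * 4 ≤ G.degIn U p + G.degIn U v + G.degIn U x := by
  set N := G.neighborsIn U x
  have hlost : ∀ y ∈ N, 4 ≤ G.mult p y + G.mult v y + G.mult x y := fun y hy =>
    have ⟨hyU, hxy⟩ := mem_neighborsIn.1 hy
    (ht.mult_add_mult_add_mult_eq_four hmax hp hv hpv hdp hx hU hdef hyU hxy).ge
  calc N.card * 4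
      ≤ G.degIn N p + G.degIn N v + G.degIn N x := by
        simpa only [degIn, smul_eq_mul, Finset.sum_add_distrib] using
          Finset.card_nsmul_le_sum N _ 4 hlost
    _ ≤ G.degIn U p + G.degIn U v + G.degIn U x := by
        gcongr <;> exact G.degIn_mono (G.neighborsIn_subset U x) _

/- If no deficient vertex remained, the neighbours of `x` would have lost all of their `4` edges to
`p`, `v` and `x`. Tightness bounds multiplicities and hence forces `x` to have at least two such
neighbours (three if `x` has degree `3` in `S`), more than the edges at `p`, `v` and `x` can
supply. -/
theorem IsTight.hasDeficient_erase_erase_erase (ht : G.IsTight S)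
    (hmax : ∀ x ∈ S, G.degIn S x ≤ 4) (hp : p ∈ S) (hv : v ∈ S) (hpv : 0 < G.mult p v)
    (hdp : G.degIn S p = 3) (hx : x ∈ (S.erase p).erase v)
    (hdx : G.degIn ((S.erase p).erase v) x = 3) :
    G.HasDeficient (((S.erase p).erase v).erase x) := by
  by_contra hdef
  have hne := ne_of_mult_pos hpv
  have hxS := Finset.mem_of_mem_erase (Finset.mem_of_mem_erase hx)
  have hdeg (y : α) := G.degIn_erase_erase_add hp hv hne y
  have hdegU (y : α) := G.degIn_erase_add hx y
  have hfew := ht.card_neighborsIn_mul_four_le hmax hp hv hne hdp hx rfl hdef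
  have hmany := ht.degIn_le_card_neighborsIn_mul hmax (erase_erase_erase_subset S p v x) hxS
  have hdxU := G.degIn_erase_self ((S.erase p).erase v) x
  have hdegp := hdeg p
  have hdegv := hdeg v
  have hdegx := hdeg x
  have hdegUp := hdegU p
  have hdegUv := hdegU v
  rw [G.mult_self] at hdegp hdegv
  rw [G.mult_comm v p] at hdegv
  rw [G.mult_comm x p, G.mult_comm x v] at hdegx
  have hdv := hmax v hv
  have hdx_cases : G.degIn S x = 3 ∨ G.degIn S x = 4 := by
    have := hmax x hxS
    omega
  rcases hdx_cases with hdxS | hdxS <;> rw [hdxS] at hmany <;> omega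

theorem exists_move_of_hasDeficient (hmax : ∀ x ∈ S, G.degIn S x ≤ 4) (hdef : G.HasDeficient S) :
    ∃ T, G.Move 0 S T ∧
      ∀ U, G.Move 3 T U → G.adjustedPotential U + 36 ≤ G.adjustedPotential S := by
  rw [adjustedPotential_of_hasDeficient hdef]
  have hmaxPair (a b : α) := degIn_le_of_subset (G := G)
    ((Finset.erase_subset b _).trans (Finset.erase_subset a S)) hmax
  by_cases ht : G.IsTight S
  · obtain ⟨p, hp, hdp_pos, hdp_lt⟩ := hdef
    obtain ⟨v, hv, hpv⟩ := exists_mult_pos_of_degIn_pos hdp_pos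
    have htight := ht p hp v hv hpv
    have hdv := hmax v hv
    have hdp : G.degIn S p = 3 := by omega
    have hpot := G.potential_erase_erase hp hv (ne_of_mult_pos hpv)
    refine ⟨_, .of_mult_pos hp hv hpv, fun U hU => ?_⟩
    have hreply := hU.adjustedPotential_add_fourteen_le (hmaxPair p v)
      fun x hx => ht.hasDeficient_erase_erase_erase hmax hp hv hpv hdp hx
    omega
  · unfold IsTight at ht
    push Not at ht
    obtain ⟨a, ha, b, hb, hab, hlight⟩ := ht
    have hpot := G.potential_erase_erase ha hb (ne_of_mult_pos hab)
    refine ⟨_, .of_mult_pos ha hb hab, fun U hU => ?_⟩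
    have hreply := hU.adjustedPotential_add_twelve_le (hmaxPair a b)
    omega

theorem exists_move_of_degIn_eq_zero (hS : S.Nonempty) (hzero : ∀ x ∈ S, G.degIn S x = 0) :
    ∃ T, G.Move 0 S T ∧ ∀ U, G.Move 3 T U → G.potential U + 36 = G.potential S := by
  obtain ⟨a, ha⟩ := hS
  have hpot := G.potential_erase ha
  have hda := hzero a ha
  have hzero' : ∀ x ∈ S.erase a, G.degIn (S.erase a) x = 0 := fun x hx =>
    Nat.le_zero.1 (degIn_le_of_subset (Finset.erase_subset a S) (fun x hx => (hzero x hx).le) x hx)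
  refine ⟨_, .inl ⟨a, ha, hda.le, rfl⟩, ?_⟩
  rintro U (⟨x, hx, -, rfl⟩ | ⟨x, hx, y, hy, hxy, -⟩)
  · have hpot' := G.potential_erase hx
    have hdx := hzero' x hx
    omega
  · exact absurd (hzero' x hx) (hxy.trans_le (mult_le_degIn hy)).ne'

theorem exists_move_of_not_hasDeficient (hS : S.Nonempty) (hmax : ∀ x ∈ S, G.degIn S x ≤ 4)
    (hdef : ¬G.HasDeficient S) :
    ∃ T, G.Move 0 S T ∧
      ∀ U, G.Move 3 T U → G.adjustedPotential U + 36 ≤ G.adjustedPotential S := by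
  rw [adjustedPotential_of_not_hasDeficient hdef]
  have hmaxPair (a b : α) := degIn_le_of_subset (G := G)
    ((Finset.erase_subset b _).trans (Finset.erase_subset a S)) hmax
  by_cases hzero : ∀ x ∈ S, G.degIn S x = 0
  · obtain ⟨T, hT, hreply⟩ := exists_move_of_degIn_eq_zero hS hzero
    exact ⟨T, hT, fun U hU =>
      (add_le_add_left (G.adjustedPotential_le_potential U) 36).trans_eq (hreply U hU)⟩
  by_cases hsimple : ∀ x ∈ S, ∀ y ∈ S, G.mult x y ≤ 1
  · push Not at hzero
    obtain ⟨a, ha, hda⟩ := hzero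
    obtain ⟨b, hb, hab⟩ := exists_mult_pos_of_degIn_pos (Nat.pos_of_ne_zero hda)
    have hpot := G.potential_erase_erase ha hb (ne_of_mult_pos hab)
    have := hmax a ha
    have := hmax b hb
    refine ⟨_, .of_mult_pos ha hb hab, fun U hU => ?_⟩
    have hreply := hU.adjustedPotential_add_fourteen_le (hmaxPair a b) fun x hx hdx =>
      hasDeficient_erase_erase_erase_of_simple hmax hdef hsimple ha hb (ne_of_mult_pos hab) hx
        (by omega)
    omega
  · push Not at hsimple
    obtain ⟨a, ha, b, hb, hab⟩ := hsimple
    have hpos : 0 < G.mult a b := by omega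
    have hpot := G.potential_erase_erase ha hb (ne_of_mult_pos hpos)
    have := hmax a ha
    have := hmax b hb
    refine ⟨_, .of_mult_pos ha hb hpos, fun U hU => ?_⟩
    have hreply := hU.adjustedPotential_add_twelve_le (hmaxPair a b)
    omega

theorem exists_move_adjustedPotential_add_le (hS : S.Nonempty)
    (hmax : ∀ x ∈ S, G.degIn S x ≤ 4) :
    ∃ T, G.Move 0 S T ∧
      ∀ U, G.Move 3 T U → G.adjustedPotential U + 36 ≤ G.adjustedPotential S := by
  by_cases hdef : G.HasDeficient S
  · exact exists_move_of_hasDeficient hmax hdef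
  · exact exists_move_of_not_hasDeficient hS hmax hdef

end LooplessMultigraph

namespace TransversalGame

section Hypergraph

variable {W : Type*} [DecidableEq W] {S T : Finset (Finset W)} {e f : Finset W} {v : W}

/-- The edges in `S` containing `v`; their number is the degree of `v`. -/
def incidentEdges (S : Finset (Finset W)) (v : W) : Finset (Finset W) :=
  S.filter (fun e => v ∈ e)

/-- The edges of `S` that remain uncovered after the vertex `v` is chosen. -/
def remainingEdges (S : Finset (Finset W)) (v : W) : Finset (Finset W) :=
  S.filter (fun e => v ∉ e)

/-- The hypergraph with edge set `S` is `k`-uniform with maximum degree at most `d`. -/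
structure IsUniformOfDegreeLE (k d : ℕ) (S : Finset (Finset W)) : Prop where
  card_eq : ∀ e ∈ S, e.card = k
  degree_le : ∀ v, (incidentEdges S v).card ≤ d

variable (W) in
/-- The multigraph on the subsets of `W` in which distinct sets are joined by as many edges as they
have common elements. -/
def intersectionMultigraph : LooplessMultigraph (Finset W) where
  mult e f := if e = f then 0 else (e ∩ f).card
  mult_comm e f := by simp only [eq_comm, Finset.inter_comm]
  mult_self e := if_pos rfl

theorem mem_incidentEdges : e ∈ incidentEdges S v ↔ e ∈ S ∧ v ∈ e :=
  Finset.mem_filter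

theorem remainingEdges_subset (S : Finset (Finset W)) (v : W) : remainingEdges S v ⊆ S :=
  Finset.filter_subset _ _

theorem remainingEdges_eq_sdiff (S : Finset (Finset W)) (v : W) :
    remainingEdges S v = S \ incidentEdges S v :=
  Finset.filter_not _ _

theorem remainingEdges_eq_erase (h : incidentEdges S v = {e}) :
    remainingEdges S v = S.erase e := by
  rw [remainingEdges_eq_sdiff, h, Finset.sdiff_singleton_eq_erase]

theorem remainingEdges_eq_erase_erase (h : incidentEdges S v = {e, f}) :
    remainingEdges S v = (S.erase e).erase f := by
  rw [remainingEdges_eq_sdiff, h, Finset.sdiff_insert, Finset.sdiff_singleton_eq_erase,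
    Finset.erase_right_comm]

theorem IsUniformOfDegreeLE.mono {k d : ℕ} (hS : IsUniformOfDegreeLE k d S) (hTS : T ⊆ S) :
    IsUniformOfDegreeLE k d T where
  card_eq e he := hS.card_eq e (hTS he)
  degree_le v := (Finset.card_le_card (Finset.filter_subset_filter _ hTS)).trans (hS.degree_le v)

theorem intersectionMultigraph_mult_pos :
    0 < (intersectionMultigraph W).mult e f ↔ e ≠ f ∧ ∃ v ∈ e, v ∈ f := by
  by_cases hef : e = f <;>
    simp [intersectionMultigraph, hef, Finset.card_pos, Finset.Nonempty]

theorem sum_card_inter_eq_sum_card_incidentEdges (S : Finset (Finset W)) (e : Finset W) :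
    ∑ f ∈ S, (e ∩ f).card = ∑ v ∈ e, (incidentEdges S v).card := by
  simp only [← Finset.filter_mem_eq_inter]
  exact (Finset.sum_card_bipartiteAbove_eq_sum_card_bipartiteBelow (· ∈ ·)).symm

theorem degIn_add_card (he : e ∈ S) :
    (intersectionMultigraph W).degIn S e + e.card = ∑ v ∈ e, (incidentEdges S v).card := by
  have hothers : ∀ f ∈ S.erase e, (intersectionMultigraph W).mult e f = (e ∩ f).card :=
    fun f hf => if_neg (Finset.ne_of_mem_erase hf).symm
  rw [← LooplessMultigraph.degIn_erase_self _ S, LooplessMultigraph.degIn,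
    Finset.sum_congr rfl hothers, ← sum_card_inter_eq_sum_card_incidentEdges,
    ← Finset.sum_erase_add S _ he, Finset.inter_self]

theorem degIn_le_card (hdeg : ∀ v, (incidentEdges S v).card ≤ 2) (he : e ∈ S) :
    (intersectionMultigraph W).degIn S e ≤ e.card := by
  have hdouble := degIn_add_card he
  have hsum := Finset.sum_le_card_nsmul e _ 2 fun v _ => hdeg v
  rw [smul_eq_mul] at hsum
  omega

theorem degIn_lt_card (hdeg : ∀ v, (incidentEdges S v).card ≤ 2) (he : e ∈ S) (hve : v ∈ e)
    (hv : (incidentEdges S v).card = 1) : (intersectionMultigraph W).degIn S e < e.card := by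
  have hdouble := degIn_add_card he
  have hsum : ∑ u ∈ e, (incidentEdges S u).card < ∑ _u ∈ e, 2 :=
    Finset.sum_lt_sum (fun u _ => hdeg u) ⟨v, hve, by omega⟩
  rw [Finset.sum_const, smul_eq_mul] at hsum
  omega

theorem sum_sum_mem_eq_sum_card_incidentEdges_mul {R : Type*} [Semiring R] [Fintype W]
    (S : Finset (Finset W)) (w : W → R) :
    ∑ e ∈ S, ∑ v ∈ e, w v = ∑ v, (incidentEdges S v).card * w v := by
  rw [Finset.sum_comm' (t' := Finset.univ) (s' := incidentEdges S)
    (by simp [mem_incidentEdges])]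
  simp only [Finset.sum_const, nsmul_eq_mul]

theorem IsUniformOfDegreeLE.potential_le [Fintype W] (hS : IsUniformOfDegreeLE 4 2 S) :
    (intersectionMultigraph W).potential S ≤ 7 * Fintype.card W := by
  have hweight : ∀ e ∈ S, 2 * (18 - ((intersectionMultigraph W).degIn S e : ℤ)) =
      ∑ v ∈ e, (11 - 2 * ((incidentEdges S v).card : ℤ)) := fun e he => by
    have hdouble := degIn_add_card he
    have hcard := hS.card_eq e he
    rw [Finset.sum_sub_distrib, ← Finset.mul_sum, ← Nat.cast_sum, ← hdouble, Finset.sum_const,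
      hcard, nsmul_eq_mul]
    push_cast
    ring
  have hvertex (v : W) :
      ((incidentEdges S v).card : ℤ) * (11 - 2 * ((incidentEdges S v).card : ℤ)) ≤ 14 := by
    have := hS.degree_le v
    interval_cases (incidentEdges S v).card <;> norm_num
  have htwice : 2 * (intersectionMultigraph W).potential S ≤ 14 * Fintype.card W :=
    calc 2 * (intersectionMultigraph W).potential S
        = ∑ e ∈ S, ∑ v ∈ e, (11 - 2 * ((incidentEdges S v).card : ℤ)) := by
          rw [LooplessMultigraph.potential, Finset.mul_sum, Finset.sum_congr rfl hweight]
      _ = ∑ v, ((incidentEdges S v).card : ℤ) * (11 - 2 * ((incidentEdges S v).card : ℤ)) :=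
          sum_sum_mem_eq_sum_card_incidentEdges_mul S _
      _ ≤ ∑ _v : W, 14 := Finset.sum_le_sum fun v _ => hvertex v
      _ = 14 * Fintype.card W := by rw [Finset.sum_const, nsmul_eq_mul, mul_comm, Finset.card_univ]
  linarith

end Hypergraph

section Game

variable {S T : Finset (Finset V)} {v : V}

theorem mem_playable : v ∈ playable S ↔ ∃ e ∈ S, v ∈ e := by
  simp only [playable, Finset.mem_filter, Finset.mem_univ, true_and]

theorem remainingEdges_ssubset (hv : v ∈ playable S) : remainingEdges S v ⊂ S := by
  obtain ⟨e, he, hve⟩ := mem_playable.1 hv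
  exact Finset.filter_ssubset.2 ⟨e, he, not_not.2 hve⟩

theorem gameVal_eq_zero (h : playable S = ∅) (ehTurn : Bool) : gameVal ehTurn S = 0 := by
  rw [gameVal, dif_neg (Finset.not_nonempty_iff_eq_empty.2 h)]

theorem gameVal_true_le (hv : v ∈ playable S) :
    gameVal true S ≤ 1 + gameVal false (remainingEdges S v) := by
  rw [gameVal, dif_pos ⟨v, hv⟩, if_pos rfl]
  gcongr
  exact Finset.inf'_le
    (fun u : playable S => gameVal (!true) (S.filter (fun e => u.1 ∉ e)))
    (Finset.mem_attach _ ⟨v, hv⟩)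

theorem exists_gameVal_false_eq (h : (playable S).Nonempty) :
    ∃ v ∈ playable S, gameVal false S = 1 + gameVal true (remainingEdges S v) := by
  obtain ⟨v, -, hv⟩ := Finset.exists_mem_eq_sup' (Finset.attach_nonempty_iff.2 h)
    (fun u : playable S => gameVal (!false) (S.filter (fun e => u.1 ∉ e)))
  refine ⟨v.1, v.2, ?_⟩
  rw [gameVal, dif_pos h, if_neg Bool.false_ne_true, hv]
  rfl

theorem mul_gameVal_true_le_of_potential {R : Type*} [Ring R] [LinearOrder R]
    [IsStrictOrderedRing R] {P : Finset (Finset V) → Prop} {φ : Finset (Finset V) → R} {c : R}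
    (hc : 0 ≤ c) (hP : ∀ S v, P S → P (remainingEdges S v)) (hnonneg : ∀ S, P S → 0 ≤ φ S)
    (hle : ∀ S, P S → (playable S).Nonempty → c ≤ φ S)
    (hround : ∀ S, P S → (playable S).Nonempty → ∃ v ∈ playable S,
      ∀ w ∈ playable (remainingEdges S v),
        φ (remainingEdges (remainingEdges S v) w) + 2 * c ≤ φ S)
    (hS : P S) : c * gameVal true S ≤ φ S := by
  induction S using Finset.strongInduction with
  | H S ih =>
    rcases (playable S).eq_empty_or_nonempty with hover | hplay
    · simpa only [gameVal_eq_zero hover, Nat.cast_zero, mul_zero] using hnonneg S hS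
    obtain ⟨v, hv, hreply⟩ := hround S hS hplay
    suffices c * (1 + gameVal false (remainingEdges S v) : ℕ) ≤ φ S from
      (mul_le_mul_of_nonneg_left (Nat.cast_le.2 (gameVal_true_le hv)) hc).trans this
    rcases (playable (remainingEdges S v)).eq_empty_or_nonempty with hover' | hplay'
    · simpa only [gameVal_eq_zero hover', add_zero, Nat.cast_one, mul_one] using hle S hS hplay
    obtain ⟨w, hw, hval⟩ := exists_gameVal_false_eq hplay'
    have hind := ih _ ((remainingEdges_subset _ w).trans_ssubset (remainingEdges_ssubset hv))
      (hP _ w (hP S v hS))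
    calc c * (1 + gameVal false (remainingEdges S v) : ℕ)
        = c * gameVal true (remainingEdges (remainingEdges S v) w) + 2 * c := by
          rw [hval]; push_cast; noncomm_ring
      _ ≤ φ (remainingEdges (remainingEdges S v) w) + 2 * c := by gcongr
      _ ≤ φ S := hreply w hw

theorem move_remainingEdges {d : ℕ} (hcard : ∀ e ∈ S, e.card ≤ d + 1)
    (hdeg : ∀ v, (incidentEdges S v).card ≤ 2) (hv : v ∈ playable S) :
    (intersectionMultigraph V).Move d S (remainingEdges S v) := by
  obtain ⟨e, he, hve⟩ := mem_playable.1 hv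
  have hpos : 0 < (incidentEdges S v).card :=
    Finset.card_pos.2 ⟨e, mem_incidentEdges.2 ⟨he, hve⟩⟩
  have hcases : (incidentEdges S v).card = 1 ∨ (incidentEdges S v).card = 2 := by
    have := hdeg v
    omega
  rcases hcases with hone | htwo
  · obtain ⟨f, hf⟩ := Finset.card_eq_one.1 hone
    obtain ⟨hfS, hvf⟩ := mem_incidentEdges.1 (hf ▸ Finset.mem_singleton_self f)
    have hlt := degIn_lt_card hdeg hfS hvf hone
    have := hcard f hfS
    exact .inl ⟨f, hfS, by omega, remainingEdges_eq_erase hf⟩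
  · obtain ⟨f, g, hfg, hpair⟩ := Finset.card_eq_two.1 htwo
    obtain ⟨hfS, hvf⟩ : f ∈ S ∧ v ∈ f := mem_incidentEdges.1 (by simp [hpair])
    obtain ⟨hgS, hvg⟩ : g ∈ S ∧ v ∈ g := mem_incidentEdges.1 (by simp [hpair])
    exact .inr ⟨f, hfS, g, hgS, intersectionMultigraph_mult_pos.2 ⟨hfg, v, hvf, hvg⟩,
      remainingEdges_eq_erase_erase hpair⟩

theorem exists_playable_remainingEdges_eq (hne : ∀ e ∈ S, e.Nonempty)
    (hdeg : ∀ v, (incidentEdges S v).card ≤ 2) (h : (intersectionMultigraph V).Move 0 S T) :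
    ∃ v ∈ playable S, remainingEdges S v = T := by
  rcases h with ⟨e, he, hiso, rfl⟩ | ⟨e, he, f, hf, hef, rfl⟩
  · obtain ⟨v, hve⟩ := hne e he
    refine ⟨v, mem_playable.2 ⟨e, he, hve⟩, remainingEdges_eq_erase ?_⟩
    refine Finset.eq_singleton_iff_unique_mem.2 ⟨mem_incidentEdges.2 ⟨he, hve⟩, fun f hf => ?_⟩
    obtain ⟨hfS, hvf⟩ := mem_incidentEdges.1 hf
    by_contra hfe
    have hpos := intersectionMultigraph_mult_pos.2 ⟨Ne.symm hfe, v, hve, hvf⟩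
    exact hiso.not_gt (hpos.trans_le (LooplessMultigraph.mult_le_degIn hfS))
  · obtain ⟨hne', v, hve, hvf⟩ := intersectionMultigraph_mult_pos.1 hef
    refine ⟨v, mem_playable.2 ⟨e, he, hve⟩, remainingEdges_eq_erase_erase ?_⟩
    have hsub : {e, f} ⊆ incidentEdges S v := by
      simp [Finset.insert_subset_iff, mem_incidentEdges, *]
    exact (Finset.eq_of_subset_of_card_le hsub
      ((hdeg v).trans (Finset.card_pair hne').ge)).symm

theorem IsUniformOfDegreeLE.eighteen_mul_gameVal_true_le (hS : IsUniformOfDegreeLE 4 2 S) :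
    18 * (gameVal true S : ℤ) ≤ (intersectionMultigraph V).adjustedPotential S := by
  have hmax {S : Finset (Finset V)} (hS : IsUniformOfDegreeLE 4 2 S) :
      ∀ e ∈ S, (intersectionMultigraph V).degIn S e ≤ 4 := fun e he =>
    hS.card_eq e he ▸ degIn_le_card hS.degree_le he
  have hnonempty {S : Finset (Finset V)} (h : (playable S).Nonempty) : S.Nonempty :=
    have ⟨_, hv⟩ := h
    have ⟨e, he, _⟩ := mem_playable.1 hv
    ⟨e, he⟩
  refine mul_gameVal_true_le_of_potential (by norm_num)
    (fun S v hS => hS.mono (remainingEdges_subset S v))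
    (fun S hS => LooplessMultigraph.adjustedPotential_nonneg (hmax hS))
    (fun S hS h => LooplessMultigraph.eighteen_le_adjustedPotential (hnonempty h) (hmax hS))
    (fun S hS h => ?_) hS
  obtain ⟨T, hT, hreply⟩ :=
    LooplessMultigraph.exists_move_adjustedPotential_add_le (hnonempty h) (hmax hS)
  obtain ⟨v, hv, rfl⟩ := exists_playable_remainingEdges_eq
    (fun e he => Finset.card_pos.1 (by rw [hS.card_eq e he]; norm_num)) hS.degree_le hT
  have hS' := hS.mono (remainingEdges_subset S v)
  exact ⟨v, hv, fun w hw => hreply _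
    (move_remainingEdges (fun e he => (hS'.card_eq e he).le) hS'.degree_le hw)⟩

end Game

end TransversalGame

/-- If `H` is a `4`-uniform hypergraph with maximum degree at most `2`,
then `τ_g(H) ≤ (7/18) n(H)`. -/
theorem gameTransversalNum_le_of_four_uniform_maxDegree_le_two
    {V : Type} [Fintype V] [DecidableEq V] (E : Finset (Finset V))
    (h4 : ∀ e ∈ E, e.card = 4)
    (hΔ : ∀ v : V, (E.filter (fun e => v ∈ e)).card ≤ 2) :
    (gameTransversalNum E : ℚ) ≤ (7 / 18) * Fintype.card V := by
  have hE : TransversalGame.IsUniformOfDegreeLE 4 2 E := ⟨h4, hΔ⟩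
  have hbound : 18 * (gameTransversalNum E : ℤ) ≤ 7 * Fintype.card V :=
    calc 18 * (gameTransversalNum E : ℤ)
        ≤ (TransversalGame.intersectionMultigraph V).adjustedPotential E :=
          hE.eighteen_mul_gameVal_true_le
      _ ≤ (TransversalGame.intersectionMultigraph V).potential E :=
          LooplessMultigraph.adjustedPotential_le_potential _ E
      _ ≤ 7 * Fintype.card V := hE.potential_le
  have hboundℚ : 18 * (gameTransversalNum E : ℚ) ≤ 7 * Fintype.card V := by exact_mod_cast hbound
  linarith
end

section
/- If H is a 4-uniform hypergraph that is 2-regular (every vertex has degree exactly 2), then τ_g(H) ≤ (7/9) m(H). -/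
variable {V : Type} [Fintype V] [DecidableEq V]

/-!
Edge-hitter always plays a vertex common to two remaining edges `x`, `y` for which the gain, i.e.
the number of vertices that become isolated, is largest. Give a position with `m` remaining edges
and `n` non-isolated vertices the weight `5 m + n`. A move hitting two edges lowers the weight by
`10` plus its gain, a move hitting one edge by `5` plus the number of private vertices of that edge.

The induction shows that nine times the remaining length of the game is at most the weight, and
strictly smaller if some double move has gain at least two. So a round of two moves must cost `18`,
or `19` if a double move of gain two is available. The only round that may be one unit short is a
double move of gain at most two followed by a move of cost `6` hitting a single edge. Counting the
edges that meet the three edges just removed shows that this round leaves a double move of gain at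
least two, which supplies the missing unit.
-/

section Hypergraph

open Finset

variable {α : Type*} [DecidableEq α] {E : Finset (Finset α)} {u v w x y : Finset α}

/-- Every vertex of the hypergraph `E` has degree at most `d`. -/
def MaxDegreeLE (E : Finset (Finset α)) (d : ℕ) : Prop :=
  ∀ a, #{e ∈ E | a ∈ e} ≤ d

/-- The vertices of `x` that lie in no edge of `E` other than `x`. -/
def privateVertices (E : Finset (Finset α)) (x : Finset α) : Finset α :=
  x \ (E.erase x).biUnion id

/-- The weight of a position with set `E` of remaining edges, the potential that bounds the length
of the game. -/
def weight (E : Finset (Finset α)) : ℕ :=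
  5 * #E + #(E.biUnion id)

/-- The gain of hitting exactly the edges `x` and `y` in one move. In maximum degree two, this is
the number of vertices that become isolated. -/
def gain (E : Finset (Finset α)) (x y : Finset α) : ℕ :=
  #(x ∩ y) + #(privateVertices E x) + #(privateVertices E y)

/-- Two edges `x` and `y` of `E` that can be hit by a single vertex. -/
structure IsDoubleMove (E : Finset (Finset α)) (x y : Finset α) : Prop where
  left_mem : x ∈ E
  right_mem : y ∈ E
  ne : x ≠ y
  inter_nonempty : (x ∩ y).Nonempty

/-- A double move of maximum gain, which is what Edge-hitter plays. -/
structure IsBestDoubleMove (E : Finset (Finset α)) (u v : Finset α) : Prop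
    extends IsDoubleMove E u v where
  gain_le : ∀ ⦃x y⦄, IsDoubleMove E x y → gain E x y ≤ gain E u v

/-- Some double move has gain at least two; these are the positions in which the weight bound
holds strictly. -/
def HasRichDoubleMove (E : Finset (Finset α)) : Prop :=
  ∃ x y, IsDoubleMove E x y ∧ 2 ≤ gain E x y

theorem MaxDegreeLE.mono {F : Finset (Finset α)} {d : ℕ} (hE : MaxDegreeLE E d) (hFE : F ⊆ E) :
    MaxDegreeLE F d :=
  fun a => (card_le_card (filter_subset_filter _ hFE)).trans (hE a)

theorem MaxDegreeLE.filter_mem_eq_pair (hE : MaxDegreeLE E 2) (hx : x ∈ E) (hy : y ∈ E)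
    (hxy : x ≠ y) {a : α} (hax : a ∈ x) (hay : a ∈ y) : {e ∈ E | a ∈ e} = {x, y} := by
  refine (eq_of_subset_of_card_le ?_ ((hE a).trans (card_pair hxy).ge)).symm
  simp [insert_subset_iff, hx, hy, hax, hay]

theorem MaxDegreeLE.pairwiseDisjoint_inter (hE : MaxDegreeLE E 2) (hx : x ∈ E) :
    (E.erase x : Set (Finset α)).PairwiseDisjoint (x ∩ ·) := by
  simp only [Set.PairwiseDisjoint, Set.Pairwise, mem_coe, mem_erase, Function.onFun,
    disjoint_left, mem_inter]
  rintro y ⟨hyx, hy⟩ z ⟨hzx, hz⟩ hyz a ⟨hax, hay⟩ ⟨-, haz⟩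
  have hmem : z ∈ ({x, y} : Finset _) := by
    rw [← hE.filter_mem_eq_pair hx hy hyx.symm hax hay]
    exact mem_filter.2 ⟨hz, haz⟩
  simp [hzx, hyz.symm] at hmem

theorem card_privateVertices_add_sum_card_inter (hE : MaxDegreeLE E 2) (hx : x ∈ E) :
    #(privateVertices E x) + ∑ y ∈ E.erase x, #(x ∩ y) = #x := by
  rw [← card_biUnion (hE.pairwiseDisjoint_inter hx), ← inter_biUnion]
  exact card_sdiff_add_card_inter _ _

theorem card_privateVertices_sdiff {S : Finset (Finset α)} (hE : MaxDegreeLE E 2) (hS : S ⊆ E)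
    (hx : x ∈ E) (hxS : x ∉ S) :
    #(privateVertices (E \ S) x) = #(privateVertices E x) + ∑ y ∈ S, #(y ∩ x) := by
  have hsplit := sum_sdiff (f := fun y => #(x ∩ y)) (subset_erase.2 ⟨hS, hxS⟩)
  have hbefore := card_privateVertices_add_sum_card_inter hE hx
  have hafter := card_privateVertices_add_sum_card_inter (hE.mono sdiff_subset)
    (mem_sdiff.2 ⟨hx, hxS⟩)
  rw [← erase_sdiff_comm] at hafter
  simp only [inter_comm _ x]
  omega

theorem card_biUnion_erase_add_card_privateVertices (hx : x ∈ E) :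
    #((E.erase x).biUnion id) + #(privateVertices E x) = #(E.biUnion id) := by
  conv_rhs => rw [← insert_erase hx, biUnion_insert, id, ← card_sdiff_add_card]
  exact add_comm _ _

theorem weight_sdiff_singleton (hx : x ∈ E) :
    weight (E \ {x}) + 5 + #(privateVertices E x) = weight E := by
  have hvertices := card_biUnion_erase_add_card_privateVertices hx
  have hedges := card_erase_add_one hx
  rw [sdiff_singleton_eq_erase]
  unfold weight
  omega

theorem IsDoubleMove.weight_sdiff_pair (hE : MaxDegreeLE E 2) (h : IsDoubleMove E x y) :
    weight (E \ {x, y}) + 10 + gain E x y = weight E := by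
  have hyx : y ∉ ({x} : Finset _) := notMem_singleton.2 h.ne.symm
  have hfirst := weight_sdiff_singleton h.left_mem
  have hsecond := weight_sdiff_singleton (mem_sdiff.2 ⟨h.right_mem, hyx⟩)
  rw [card_privateVertices_sdiff hE (singleton_subset_iff.2 h.left_mem) h.right_mem hyx,
    sum_singleton, sdiff_sdiff, sup_eq_union, ← insert_eq] at hsecond
  unfold gain
  omega

theorem IsDoubleMove.one_le_gain (h : IsDoubleMove E x y) : 1 ≤ gain E x y := by
  have := h.inter_nonempty.card_pos
  unfold gain
  omega

theorem exists_isBestDoubleMove (h : ∃ x y, IsDoubleMove E x y) :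
    ∃ u v, IsBestDoubleMove E u v := by
  classical
  have hne : ({p ∈ E ×ˢ E | IsDoubleMove E p.1 p.2}).Nonempty := by
    obtain ⟨x, y, hxy⟩ := h
    exact ⟨(x, y), by simp [hxy, hxy.left_mem, hxy.right_mem]⟩
  obtain ⟨p, hp, hmax⟩ := exists_max_image _ (fun p => gain E p.1 p.2) hne
  exact ⟨p.1, p.2, (mem_filter.1 hp).2, fun x y hxy =>
    hmax (x, y) (by simp [hxy, hxy.left_mem, hxy.right_mem])⟩

theorem IsBestDoubleMove.card_inter_eq_zero_or_gain_le (h : IsBestDoubleMove E u v) (hx : x ∈ E)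
    (hy : y ∈ E) (hxy : x ≠ y) : #(x ∩ y) = 0 ∨ gain E x y ≤ gain E u v :=
  (Nat.eq_zero_or_pos _).imp_right fun hpos => h.gain_le ⟨hx, hy, hxy, card_pos.1 hpos⟩

theorem IsBestDoubleMove.two_le_gain (h : IsBestDoubleMove E u v) (hE : HasRichDoubleMove E) :
    2 ≤ gain E u v := by
  obtain ⟨x, y, hxy, hgain⟩ := hE
  exact hgain.trans (h.gain_le hxy)

theorem nine_mul_card_le_weight (h4 : ∀ e ∈ E, #e = 4) (hE : ¬∃ x y, IsDoubleMove E x y) :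
    9 * #E ≤ weight E := by
  have hdisj : (E : Set (Finset α)).PairwiseDisjoint id := fun x hx y hy hxy => by
    by_contra hmeet
    exact hE ⟨x, y, hx, hy, hxy, not_disjoint_iff_nonempty_inter.1 hmeet⟩
  rw [weight, card_biUnion hdisj, sum_const_nat (f := fun e => #(id e)) h4]
  omega

theorem filter_notMem_eq_sdiff_singleton_or_pair (hE : MaxDegreeLE E 2) {a : α}
    (ha : a ∈ E.biUnion id) :
    (∃ x ∈ E, (privateVertices E x).Nonempty ∧ {e ∈ E | a ∉ e} = E \ {x}) ∨
      ∃ x y, IsDoubleMove E x y ∧ {e ∈ E | a ∉ e} = E \ {x, y} := by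
  have hpos : 0 < #{e ∈ E | a ∈ e} := by
    obtain ⟨e, he, hae⟩ := mem_biUnion.1 ha
    exact card_pos.2 ⟨e, mem_filter.2 ⟨he, hae⟩⟩
  obtain hone | htwo : #{e ∈ E | a ∈ e} = 1 ∨ #{e ∈ E | a ∈ e} = 2 := by
    have := hE a
    omega
  · obtain ⟨x, hx⟩ := card_eq_one.1 hone
    have hmem : ∀ e, e ∈ E ∧ a ∈ e ↔ e = x := by simpa [Finset.ext_iff] using hx
    refine .inl ⟨x, ((hmem x).2 rfl).1, ⟨a, ?_⟩, by rw [filter_not, hx]⟩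
    simp only [privateVertices, mem_sdiff, mem_biUnion, mem_erase, id]
    exact ⟨((hmem x).2 rfl).2, fun ⟨e, ⟨hex, he⟩, hae⟩ => hex ((hmem e).1 ⟨he, hae⟩)⟩
  · obtain ⟨x, y, hxy, hpair⟩ := card_eq_two.1 htwo
    have hmem : ∀ e, e ∈ E ∧ a ∈ e ↔ e = x ∨ e = y := by simpa [Finset.ext_iff] using hpair
    obtain ⟨hx, hax⟩ := (hmem x).2 (.inl rfl)
    obtain ⟨hy, hay⟩ := (hmem y).2 (.inr rfl)
    exact .inr ⟨x, y, ⟨hx, hy, hxy, a, mem_inter.2 ⟨hax, hay⟩⟩, by rw [filter_not, hpair]⟩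

theorem card_privateVertices_eq_card (hE : MaxDegreeLE E 2) (hrich : ¬HasRichDoubleMove E)
    (hx : x ∈ E) (hpriv : (privateVertices E x).Nonempty) : #(privateVertices E x) = #x := by
  rw [← card_privateVertices_add_sum_card_inter hE hx, left_eq_add]
  refine sum_eq_zero fun y hy => ?_
  obtain ⟨hyx, hyE⟩ := mem_erase.1 hy
  by_contra hmeet
  refine hrich ⟨x, y, ⟨hx, hyE, hyx.symm, card_ne_zero.1 hmeet⟩, ?_⟩
  have := hpriv.card_pos
  unfold gain
  omega

theorem IsDoubleMove.card_privateVertices_sdiff_triple (hE : MaxDegreeLE E 2)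
    (h : IsDoubleMove E u v) (hw : w ∈ E \ {u, v}) (hx : x ∈ E \ {u, v, w}) :
    #(privateVertices (E \ {u, v, w}) x) =
      #(privateVertices E x) + #(u ∩ x) + #(v ∩ x) + #(w ∩ x) := by
  obtain ⟨hwE, hwu, hwv⟩ : w ∈ E ∧ w ≠ u ∧ w ≠ v := by simpa using hw
  obtain ⟨hxE, hxS⟩ := mem_sdiff.1 hx
  have hsub : {u, v, w} ⊆ E := by simp [insert_subset_iff, h.left_mem, h.right_mem, hwE]
  rw [card_privateVertices_sdiff hE hsub hxE hxS, sum_insert (by simp [h.ne, hwu.symm]),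
    sum_pair hwv.symm]
  ring

theorem card_privateVertices_sdiff_pair (hE : MaxDegreeLE E 2) (hv : v ∈ E) (hw : w ∈ E)
    (hvw : v ≠ w) (hx : x ∈ E \ {v, w}) :
    #(privateVertices (E \ {v, w}) x) = #(privateVertices E x) + #(v ∩ x) + #(w ∩ x) := by
  obtain ⟨hxE, hxS⟩ := mem_sdiff.1 hx
  rw [card_privateVertices_sdiff hE (by simp [insert_subset_iff, *]) hxE hxS, sum_pair hvw,
    add_assoc]

theorem card_privateVertices_sdiff_pair_add_sum (hE : MaxDegreeLE E 2) (hu : u ∈ E \ {v, w}) :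
    #(privateVertices (E \ {v, w}) u) + ∑ x ∈ E \ {u, v, w}, #(u ∩ x) = #u := by
  rw [sdiff_insert E {v, w} u]
  exact card_privateVertices_add_sum_card_inter (hE.mono sdiff_subset) hu

theorem IsDoubleMove.sum_card_inter_add_gain (hE : MaxDegreeLE E 2) (h : IsDoubleMove E u v)
    (hw : w ∈ E \ {u, v}) :
    ∑ x ∈ E \ {u, v, w}, (#(u ∩ x) + #(v ∩ x)) + gain E u v + #(u ∩ v) + #(u ∩ w) + #(v ∩ w) =
      #u + #v := by
  obtain ⟨hwE, hwu, hwv⟩ : w ∈ E ∧ w ≠ u ∧ w ≠ v := by simpa using hw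
  have hu : u ∈ E \ {v, w} := by simp [h.left_mem, h.ne, hwu.symm]
  have hv : v ∈ E \ {u, w} := by simp [h.right_mem, h.ne.symm, hwv.symm]
  have hsumu := card_privateVertices_sdiff_pair_add_sum hE hu
  have hsumv := card_privateVertices_sdiff_pair_add_sum hE hv
  rw [card_privateVertices_sdiff_pair hE h.right_mem hwE hwv.symm hu, inter_comm v u,
    inter_comm w u] at hsumu
  rw [card_privateVertices_sdiff_pair hE h.left_mem hwE hwu.symm hv, insert_comm v u,
    inter_comm w v] at hsumv
  rw [sum_add_distrib]
  unfold gain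
  omega

theorem IsDoubleMove.card_privateVertices_add_card_inter_eq (hE : MaxDegreeLE E 2)
    (h : IsDoubleMove E u v) (hw : w ∈ E \ {u, v}) (hrich : ¬HasRichDoubleMove (E \ {u, v, w}))
    (hx : x ∈ E \ {u, v, w}) (hwx : (w ∩ x).Nonempty) :
    #(privateVertices E x) + #(u ∩ x) + #(v ∩ x) + #(w ∩ x) = #x := by
  have hpriv := h.card_privateVertices_sdiff_triple hE hw hx
  have hpos := hwx.card_pos
  rw [← hpriv]
  exact card_privateVertices_eq_card (hE.mono sdiff_subset) hrich hx (card_pos.1 (by omega))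

theorem IsBestDoubleMove.card_inter_bounds (h4 : ∀ e ∈ E, #e = 4) (hE : MaxDegreeLE E 2)
    (h : IsBestDoubleMove E u v) (hgain : gain E u v ≤ 2) (hw : w ∈ E \ {u, v})
    (hrich : ¬HasRichDoubleMove (E \ {u, v, w})) (hx : x ∈ E \ {u, v, w})
    (hwx : (w ∩ x).Nonempty) :
    gain E u v = 2 ∧ #(w ∩ x) + #(privateVertices E w) ≤ 2 ∧ 2 ≤ #(u ∩ x) + #(v ∩ x) ∧
      (#(w ∩ x) = 1 → #(u ∩ x) + #(v ∩ x) = 2 → #(u ∩ v) = 2) := by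
  have hwE := (mem_sdiff.1 hw).1
  obtain ⟨hxE, hxu, hxv, hxw⟩ : x ∈ E ∧ x ≠ u ∧ x ≠ v ∧ x ≠ w := by simpa using hx
  have htotal := h.card_privateVertices_add_card_inter_eq hE hw hrich hx hwx
  have hgainu := h.card_inter_eq_zero_or_gain_le h.left_mem hxE hxu.symm
  have hgainv := h.card_inter_eq_zero_or_gain_le h.right_mem hxE hxv.symm
  have hgainw := h.gain_le ⟨hwE, hxE, hxw.symm, hwx⟩
  rw [h4 x hxE] at htotal
  unfold gain at *
  omega

theorem card_eq_two_of_sum_bounds {ι : Type*} {T : Finset ι} {f g : ι → ℕ}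
    (hf : ∀ i ∈ T, f i ≤ 2) (hg : ∀ i ∈ T, 2 ≤ g i) (hsumf : 2 < ∑ i ∈ T, f i)
    (hsumg : ∑ i ∈ T, g i < 6) : #T = 2 := by
  have hfT : ∑ i ∈ T, f i ≤ #T • 2 := sum_le_card_nsmul T f 2 hf
  have hgT : #T • 2 ≤ ∑ i ∈ T, g i := card_nsmul_le_sum T g 2 hg
  rw [smul_eq_mul] at hfT hgT
  omega

-- If no rich double move were left, each edge meeting `w` would have two vertices in `u ∪ v`. This
-- leaves room for only two such edges, sharing one and two vertices with `w`, and forces both to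
-- have exactly two vertices in `u ∪ v` and `u ∩ v` to be a singleton; by maximality of the gain,
-- the edge sharing one vertex with `w` excludes this.
theorem IsBestDoubleMove.hasRichDoubleMove_sdiff (h4 : ∀ e ∈ E, #e = 4) (hE : MaxDegreeLE E 2)
    (h : IsBestDoubleMove E u v) (hgain : gain E u v ≤ 2) (hw : w ∈ E \ {u, v})
    (hpriv : #(privateVertices (E \ {u, v}) w) = 1) : HasRichDoubleMove (E \ {u, v, w}) := by
  by_contra hrich
  have hwE := (mem_sdiff.1 hw).1
  have huv := h.inter_nonempty.card_pos
  have hsumw := card_privateVertices_sdiff_pair_add_sum hE hw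
  have hsumuv := h.sum_card_inter_add_gain hE hw
  rw [hpriv, h4 w hwE, insert_comm w u, pair_comm w v] at hsumw
  rw [card_privateVertices_sdiff_pair hE h.left_mem h.right_mem h.ne hw] at hpriv
  rw [h4 u h.left_mem, h4 v h.right_mem] at hsumuv
  set T := {x ∈ E \ {u, v, w} | (w ∩ x).Nonempty}
  have hsumwT : ∑ x ∈ T, #(w ∩ x) = ∑ x ∈ E \ {u, v, w}, #(w ∩ x) :=
    sum_filter_of_ne fun x _ hx => card_ne_zero.1 hx
  have hsumuvT : ∑ x ∈ T, (#(u ∩ x) + #(v ∩ x)) ≤ ∑ x ∈ E \ {u, v, w}, (#(u ∩ x) + #(v ∩ x)) :=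
    sum_le_sum_of_subset (filter_subset _ _)
  have hbounds : ∀ x ∈ T, gain E u v = 2 ∧ #(w ∩ x) + #(privateVertices E w) ≤ 2 ∧
      2 ≤ #(u ∩ x) + #(v ∩ x) ∧ (#(w ∩ x) = 1 → #(u ∩ x) + #(v ∩ x) = 2 → #(u ∩ v) = 2) :=
    fun x hx => h.card_inter_bounds h4 hE hgain hw hrich (mem_filter.1 hx).1 (mem_filter.1 hx).2
  have hgain_eq : gain E u v = 2 := by
    obtain ⟨x, hx⟩ : T.Nonempty := nonempty_of_sum_ne_zero (by omega : ∑ x ∈ T, #(w ∩ x) ≠ 0)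
    exact (hbounds x hx).1
  have hcard : #T = 2 := card_eq_two_of_sum_bounds
    (fun x hx => le_of_add_le_left (hbounds x hx).2.1) (fun x hx => (hbounds x hx).2.2.1)
    (by omega) (by omega)
  obtain ⟨x, y, hxy, hTxy⟩ := card_eq_two.1 hcard
  have hx := hbounds x (by simp [hTxy])
  have hy := hbounds y (by simp [hTxy])
  rw [hTxy, sum_pair hxy] at hsumuvT hsumwT
  omega

theorem IsBestDoubleMove.weight_sdiff_pair_sdiff_singleton_le (h4 : ∀ e ∈ E, #e = 4)
    (hE : MaxDegreeLE E 2) (h : IsBestDoubleMove E u v) (hw : w ∈ E \ {u, v})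
    (hpriv : (privateVertices (E \ {u, v}) w).Nonempty) :
    weight ((E \ {u, v}) \ {w}) + 16 + gain E u v ≤ weight E ∧
      (gain E u v ≤ 2 → HasRichDoubleMove ((E \ {u, v}) \ {w}) ∨
        weight ((E \ {u, v}) \ {w}) + 17 + gain E u v ≤ weight E) := by
  have hfirst := h.weight_sdiff_pair hE
  have hsecond := weight_sdiff_singleton hw
  have hpos := hpriv.card_pos
  refine ⟨by omega, fun hgain => ?_⟩
  obtain hone | htwo : #(privateVertices (E \ {u, v}) w) = 1 ∨
      2 ≤ #(privateVertices (E \ {u, v}) w) := by omega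
  · left
    have := h.hasRichDoubleMove_sdiff h4 hE hgain hw hone
    rwa [sdiff_sdiff, sup_eq_union, insert_union, ← insert_eq]
  · right
    omega

theorem IsBestDoubleMove.weight_after_reply_le (h4 : ∀ e ∈ E, #e = 4)
    (hE : MaxDegreeLE E 2) (h : IsBestDoubleMove E u v) {a : α}
    (ha : a ∈ (E \ {u, v}).biUnion id) :
    weight {e ∈ E \ {u, v} | a ∉ e} + 16 + gain E u v ≤ weight E ∧
      (gain E u v ≤ 2 → HasRichDoubleMove {e ∈ E \ {u, v} | a ∉ e} ∨
        weight {e ∈ E \ {u, v} | a ∉ e} + 17 + gain E u v ≤ weight E) := by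
  obtain ⟨w, hw, hpriv, heq⟩ | ⟨w, z, hwz, heq⟩ :=
    filter_notMem_eq_sdiff_singleton_or_pair (hE.mono sdiff_subset) ha
  · rw [heq]
    exact h.weight_sdiff_pair_sdiff_singleton_le h4 hE hw hpriv
  · have hfirst := h.weight_sdiff_pair hE
    have hsecond := hwz.weight_sdiff_pair (hE.mono sdiff_subset)
    rw [heq]
    omega

end Hypergraph

section Game

open Finset

variable {E : Finset (Finset V)}

theorem playable_eq_biUnion (E : Finset (Finset V)) : playable E = E.biUnion id := by
  ext a
  simp [playable]

theorem filter_notMem_ssubset {a : V} (ha : a ∈ playable E) : {e ∈ E | a ∉ e} ⊂ E := by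
  obtain ⟨e, he, hae⟩ := (mem_filter.1 ha).2
  exact filter_ssubset.2 ⟨e, he, not_not.2 hae⟩

theorem gameVal_of_playable_eq_empty (h : playable E = ∅) (ehTurn : Bool) :
    gameVal ehTurn E = 0 := by
  rw [gameVal, dif_neg (by simp [h])]

theorem gameVal_true_le {a : V} (ha : a ∈ playable E) :
    gameVal true E ≤ 1 + gameVal false {e ∈ E | a ∉ e} := by
  rw [gameVal, dif_pos ⟨a, ha⟩, if_pos rfl]
  gcongr
  exact inf'_le (fun b : playable E => gameVal false {e ∈ E | b.1 ∉ e}) (mem_attach _ ⟨a, ha⟩)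

theorem exists_gameVal_false_eq (h : (playable E).Nonempty) :
    ∃ a ∈ playable E, gameVal false E = 1 + gameVal true {e ∈ E | a ∉ e} := by
  obtain ⟨a, -, ha⟩ := exists_mem_eq_sup' (attach_nonempty_iff.2 h)
    (fun b : playable E => gameVal true {e ∈ E | b.1 ∉ e})
  refine ⟨a, a.2, ?_⟩
  rw [gameVal, dif_pos h, if_neg Bool.false_ne_true, ← ha]
  rfl

theorem gameVal_le_card (ehTurn : Bool) (E : Finset (Finset V)) : gameVal ehTurn E ≤ #E := by
  induction E using strongInduction generalizing ehTurn with
  | H E ih =>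
    obtain hempty | hne := (playable E).eq_empty_or_nonempty
    · simp [gameVal_of_playable_eq_empty hempty]
    · obtain ⟨a, ha, hle⟩ : ∃ a ∈ playable E,
          gameVal ehTurn E ≤ 1 + gameVal (!ehTurn) {e ∈ E | a ∉ e} := by
        cases ehTurn with
        | true => exact hne.imp fun a ha => ⟨ha, gameVal_true_le ha⟩
        | false => exact (exists_gameVal_false_eq hne).imp fun a ha => ⟨ha.1, ha.2.le⟩
      have hrest := ih _ (filter_notMem_ssubset ha) (!ehTurn)
      have hlt := card_lt_card (filter_notMem_ssubset ha)
      omega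

theorem IsDoubleMove.gameVal_true_le_sdiff {x y : Finset V} (hE : MaxDegreeLE E 2)
    (h : IsDoubleMove E x y) : gameVal true E ≤ 1 + gameVal false (E \ {x, y}) := by
  obtain ⟨a, ha⟩ := h.inter_nonempty
  obtain ⟨hax, hay⟩ := mem_inter.1 ha
  rw [← hE.filter_mem_eq_pair h.left_mem h.right_mem h.ne hax hay, ← filter_not]
  exact gameVal_true_le (mem_filter.2 ⟨mem_univ a, x, h.left_mem, hax⟩)

theorem nine_mul_gameVal_true_le_weight (h4 : ∀ e ∈ E, #e = 4) (hE : MaxDegreeLE E 2) :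
    9 * gameVal true E ≤ weight E ∧ (HasRichDoubleMove E → 9 * gameVal true E < weight E) := by
  induction E using strongInduction with
  | H E ih =>
  by_cases hmove : ∃ x y, IsDoubleMove E x y
  · obtain ⟨u, v, huv⟩ := exists_isBestDoubleMove hmove
    have hpos := huv.one_le_gain
    have hweight := huv.weight_sdiff_pair hE
    have hfirst := huv.gameVal_true_le_sdiff hE
    suffices 9 * gameVal true E ≤ weight E ∧
        (2 ≤ gain E u v → 9 * gameVal true E < weight E) from
      ⟨this.1, fun hrich => this.2 (huv.two_le_gain hrich)⟩
    obtain hempty | hne := (playable (E \ {u, v})).eq_empty_or_nonempty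
    · rw [gameVal_of_playable_eq_empty hempty] at hfirst
      omega
    · obtain ⟨a, ha, hsecond⟩ := exists_gameVal_false_eq hne
      obtain ⟨hle, hlt⟩ := ih _ ((filter_notMem_ssubset ha).trans_subset sdiff_subset)
        (fun e he => h4 e (mem_sdiff.1 (mem_filter.1 he).1).1)
        (hE.mono ((filter_subset _ _).trans sdiff_subset))
      rw [playable_eq_biUnion] at ha
      obtain ⟨hround, hcheap⟩ := huv.weight_after_reply_le h4 hE ha
      obtain hgain | hgain := le_or_gt (gain E u v) 2
      · obtain hrich | hround := hcheap hgain
        · have := hlt hrich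
          omega
        · omega
      · omega
  · have hweight := nine_mul_card_le_weight h4 hmove
    have hcard := gameVal_le_card true E
    exact ⟨by omega, fun ⟨x, y, hxy, _⟩ => absurd ⟨x, y, hxy⟩ hmove⟩

theorem card_playable_mul_le {k d : ℕ} (hk : ∀ e ∈ E, #e ≤ k)
    (hd : ∀ a ∈ playable E, d ≤ #{e ∈ E | a ∈ e}) : #(playable E) * d ≤ #E * k :=
  card_mul_le_card_mul (· ∈ ·) hd fun e he =>
    (card_le_card fun _ ha => (mem_filter.1 ha).2).trans (hk e he)

end Game

theorem gameTransversalNum_le_of_four_uniform_two_regular_general (E : Finset (Finset V))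
    (h4 : ∀ e ∈ E, e.card = 4) (hdeg : ∀ v : V, (E.filter (fun e => v ∈ e)).card ≤ 2) :
    (gameTransversalNum E : ℚ) ≤ (5 * E.card + (playable E).card) / 9 := by
  rw [playable_eq_biUnion, le_div_iff₀' (by norm_num)]
  exact_mod_cast (nine_mul_gameVal_true_le_weight h4 hdeg).1

/-- If `H` is a `4`-uniform `2`-regular hypergraph, then `τ_g(H) ≤ (7/9) m(H)`. -/
theorem gameTransversalNum_le_of_four_uniform_two_regular
    {V : Type} [Fintype V] [DecidableEq V] (E : Finset (Finset V))
    (h4 : ∀ e ∈ E, e.card = 4)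
    (hreg : ∀ v : V, (E.filter (fun e => v ∈ e)).card = 2) :
    (gameTransversalNum E : ℚ) ≤ (7 / 9) * E.card := by
  have hgeneral :=
    gameTransversalNum_le_of_four_uniform_two_regular_general E h4 fun v => (hreg v).le
  have hcount : ((playable E).card * 2 : ℚ) ≤ E.card * 4 := mod_cast
    card_playable_mul_le (fun e he => (h4 e he).le) fun v _ => (hreg v).ge
  linarith
end
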